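/- arXiv:1410.7138 — 2 statements merged into one kernel-verified Lean document; each statement's English description precedes it below -/
import Mathlib

section
/- For g ∈ {2, 3, 5, 6}, the abelianization of O(g, ℤ/2) (equivalently, the first integral group homology H₁(O(g, ℤ/2); ℤ)) is isomorphic to ℤ/2, generated by the class of any transposition matrix a_i. -/
/-!
The abelianization is shown to be generated by the class of any transposition, and a character
nontrivial on a transposition shows that this class has order exactly `2`.

For an isotropic vector `v` over `ℤ/2`, the transvection `x ↦ x + (x · v) v` is orthogonal;
for `v = eᵢ + eⱼ` it is the transposition matrix of `i` and `j`. Transvections along vectors of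
weight `2` and `4` generate `O(n, ℤ/2)` (`eq_top_of_transv_mem`): a matrix fixing the basis
vectors in `S` sends a further basis vector to a vector of odd weight supported outside `S`. If
this support is not all of the complement of `S`, a weight-`4` transvection lowers the weight by
`2`; if it is, the vector is itself fixed, because the all-ones vector is fixed by the whole group,
and so it is a basis vector. Transpositions are conjugate to one another, and when there is a fifth
index every weight-`4` transvection is conjugate to a transposition; hence outside dimension `4` a
single transposition generates the abelianization (`eq_top_of_swapT_mem`).

The character comes from the exceptional map `O(6, ℤ/2) → S₆`. The six functions
`|x| + 2 xᵢ` with values in `ℤ/4` have distinct zero sets, and the group permutes these zero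
sets: the transposition matrix of `p` and `q`, as well as the transvection along the complement of
`{p, q}`, exchange the `p`-th and `q`-th. The sign of this permutation is `-1` on transpositions,
and it restricts to the smaller groups along `A ↦ A ⊕ 1`.
-/

namespace OrthoF2

open Matrix Finset

/-! ### Generation by transvections -/

section Transvections

variable {n : Type*} [DecidableEq n]

/-- The characteristic vector of a set of indices; every vector over `ℤ/2` is of this form. -/
def ind (s : Finset n) : n → ZMod 2 := fun i => if i ∈ s then 1 else 0

lemma ind_apply (s : Finset n) (i : n) : ind s i = if i ∈ s then 1 else 0 := rfl

lemma ind_singleton (k : n) : ind {k} = Pi.single k 1 := by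
  ext i
  simp [ind_apply, Pi.single_apply]

lemma ind_injective : Function.Injective (ind : Finset n → n → ZMod 2) := by
  intro s t h
  ext i
  have := congrFun h i
  simp only [ind_apply] at this
  by_cases h1 : i ∈ s <;> by_cases h2 : i ∈ t <;> simp_all

lemma insert_erase_inter_pair {w : Finset n} {a e : n} :
    insert e (w.erase a) ∩ {a, e} = {e} := by
  ext c
  simp only [mem_inter, mem_insert, mem_erase, mem_singleton]
  grind

lemma symmDiff_pair_insert_erase {w : Finset n} {a e : n} (ha : a ∈ w) (he : e ∉ w) :
    symmDiff {a, e} (insert e (w.erase a)) = w := by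
  ext c
  simp only [mem_symmDiff, mem_insert, mem_erase, mem_singleton]
  grind

variable [Fintype n]

lemma transpose_mul_self (A : orthogonalGroup n (ZMod 2)) : A.1ᵀ * A.1 = 1 :=
  (mem_orthogonalGroup_iff' n (ZMod 2)).1 A.2

lemma self_mul_transpose (A : orthogonalGroup n (ZMod 2)) : A.1 * A.1ᵀ = 1 :=
  (mem_orthogonalGroup_iff n (ZMod 2)).1 A.2

lemma val_mul (A B : orthogonalGroup n (ZMod 2)) : (A * B).1 = A.1 * B.1 := rfl

lemma val_one : (1 : orthogonalGroup n (ZMod 2)).1 = 1 := rfl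

lemma exists_eq_ind (v : n → ZMod 2) : ∃ s : Finset n, v = ind s := by
  refine ⟨univ.filter (fun i => v i = 1), ?_⟩
  ext i
  have h : ∀ a : ZMod 2, a = if a = 1 then 1 else 0 := by decide
  simpa [ind_apply] using congrArg id (h (v i))

lemma ind_dotProduct_ind (s t : Finset n) : ind s ⬝ᵥ ind t = ((s ∩ t).card : ZMod 2) := by
  have : ∀ i, ind s i * ind t i = if i ∈ s ∩ t then 1 else 0 := by
    intro i
    by_cases h1 : i ∈ s <;> by_cases h2 : i ∈ t <;> simp [ind_apply, h1, h2]
  simp only [dotProduct, this]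
  rw [sum_boole, filter_mem_eq_inter, univ_inter]

lemma ind_self_dotProduct {s : Finset n} (hs : Even s.card) : ind s ⬝ᵥ ind s = 0 := by
  rw [ind_dotProduct_ind, inter_self]
  exact (ZMod.natCast_eq_zero_iff_even).2 hs

/-- The orthogonal transvection `x ↦ x + (x · v) v` attached to an isotropic vector `v`. -/
def transv (v : n → ZMod 2) (hv : v ⬝ᵥ v = 0) : orthogonalGroup n (ZMod 2) :=
  ⟨1 + vecMulVec v v, by
    rw [mem_orthogonalGroup_iff, transpose_add, transpose_one, transpose_vecMulVec, mul_add,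
      mul_one, add_mul, one_mul, vecMulVec_mul_vecMulVec, hv]
    have : vecMulVec v v + vecMulVec v v = 0 := by
      ext i j
      exact CharTwo.add_self_eq_zero _
    simp [add_assoc, this]⟩

lemma transv_mulVec (v : n → ZMod 2) (hv : v ⬝ᵥ v = 0) (x : n → ZMod 2) :
    (transv v hv).1 *ᵥ x = x + (v ⬝ᵥ x) • v := by
  simp [transv, add_mulVec, vecMulVec_mulVec]

lemma mulVec_dotProduct_mulVec (A : orthogonalGroup n (ZMod 2)) (x y : n → ZMod 2) :
    (A.1 *ᵥ x) ⬝ᵥ (A.1 *ᵥ y) = x ⬝ᵥ y := by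
  rw [dotProduct_mulVec, vecMul_mulVec, transpose_mul_self A, vecMul_one]

lemma mulVec_injective (A : orthogonalGroup n (ZMod 2)) :
    Function.Injective (fun x => A.1 *ᵥ x) := by
  intro x y h
  have := congrArg (fun z => A.1ᵀ *ᵥ z) h
  simpa [mulVec_mulVec, transpose_mul_self A] using this

lemma mulVec_surjective (A : orthogonalGroup n (ZMod 2)) :
    Function.Surjective (fun x => A.1 *ᵥ x) := fun y =>
  ⟨A.1ᵀ *ᵥ y, by simp [mulVec_mulVec, self_mul_transpose A]⟩

lemma conj_transv (A : orthogonalGroup n (ZMod 2)) (v : n → ZMod 2) (hv : v ⬝ᵥ v = 0) :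
    A * transv v hv * A⁻¹ =
      transv (A.1 *ᵥ v) ((mulVec_dotProduct_mulVec A v v).trans hv) := by
  rw [mul_inv_eq_iff_eq_mul]
  apply Subtype.ext
  change A.1 * (1 + vecMulVec v v) = (1 + vecMulVec (A.1 *ᵥ v) (A.1 *ᵥ v)) * A.1
  rw [mul_add, add_mul, mul_one, one_mul, mul_vecMulVec, vecMulVec_mul, vecMul_mulVec,
    transpose_mul_self A, vecMul_one]

/-- Since `x · 𝟙 = x · x`, the all-ones vector is fixed by every orthogonal matrix. -/
lemma mulVec_ind_univ (A : orthogonalGroup n (ZMod 2)) : A.1 *ᵥ ind univ = ind univ := by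
  have hsq : ∀ a : ZMod 2, a * a = a := by decide
  have h1 : ∀ x : n → ZMod 2, x ⬝ᵥ ind univ = x ⬝ᵥ x := by
    intro x
    simp [dotProduct, ind_apply, hsq]
  apply dotProduct_eq
  intro y
  obtain ⟨x, rfl⟩ := mulVec_surjective A y
  simp only
  rw [mulVec_dotProduct_mulVec, dotProduct_comm, h1, dotProduct_comm (ind univ), h1,
    mulVec_dotProduct_mulVec]

lemma mulVec_ind_of_fix (A : orthogonalGroup n (ZMod 2)) (S : Finset n)
    (hS : ∀ i ∈ S, A.1 *ᵥ ind {i} = ind {i}) : A.1 *ᵥ ind S = ind S := by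
  have : ind S = ∑ i ∈ S, ind {i} := by
    ext k
    simp [ind_apply, Finset.sum_apply]
  rw [this, ← mulVecLin_apply, map_sum]
  exact Finset.sum_congr rfl fun i hi => by simpa using hS i hi

/-- A transvection moves `ind s` to the symmetric difference of `s` with its set,
when the two meet in an odd number of indices. -/
lemma transv_ind_mulVec (w s : Finset n) (hw : ind w ⬝ᵥ ind w = 0) (h : Odd (w ∩ s).card) :
    (transv (ind w) hw).1 *ᵥ ind s = ind (symmDiff s w) := by
  rw [transv_mulVec, ind_dotProduct_ind, (ZMod.natCast_eq_one_iff_odd).2 h, one_smul]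
  ext i
  by_cases h1 : i ∈ s <;> by_cases h2 : i ∈ w <;>
    simp [ind_apply, mem_symmDiff, h1, h2, CharTwo.add_self_eq_zero]

lemma transv_ind_fix (w : Finset n) (hw : ind w ⬝ᵥ ind w = 0) {i : n} (h : i ∉ w) :
    (transv (ind w) hw).1 *ᵥ ind {i} = ind {i} := by
  rw [transv_mulVec, ind_dotProduct_ind]
  simp [h]

/-- Generation, for matrices fixing the basis vectors indexed by `S`: those matrices move a further
basis vector to some `ind s` with `s` odd and disjoint from `S`, and transvections of
weight `4` shrink `s` to a singleton. -/
lemma mem_of_fix (H : Subgroup (orthogonalGroup n (ZMod 2)))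
    (hH : ∀ (w : Finset n) (hw : ind w ⬝ᵥ ind w = 0), w.card = 2 ∨ w.card = 4 →
      transv (ind w) hw ∈ H) (m : ℕ) :
    ∀ (S : Finset n), Sᶜ.card = m → ∀ A : orthogonalGroup n (ZMod 2),
      (∀ i ∈ S, A.1 *ᵥ ind {i} = ind {i}) → A ∈ H := by
  induction m with
  | zero =>
    intro S hS A hA
    rw [card_eq_zero, compl_eq_empty_iff] at hS
    subst hS
    have : A = 1 := by
      apply Subtype.ext
      ext i j
      have := congrFun (hA j (mem_univ j)) i
      rw [ind_singleton, mulVec_single_one] at this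
      simpa [one_apply, Pi.single_apply] using this
    rw [this]
    exact H.one_mem
  | succ m ih =>
    intro S hS
    obtain ⟨k, hk⟩ : Sᶜ.Nonempty := by
      rw [← card_pos, hS]
      omega
    have hkS : k ∉ S := mem_compl.1 hk
    have hcard : (insert k S)ᶜ.card = m := by
      rw [compl_insert, card_erase_of_mem hk, hS]
      omega
    suffices key : ∀ (N : ℕ) (A : orthogonalGroup n (ZMod 2)),
        (∀ i ∈ S, A.1 *ᵥ ind {i} = ind {i}) → ∀ s : Finset n, A.1 *ᵥ ind {k} = ind s →
          s.card = N → A ∈ H by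
      intro A hA
      obtain ⟨s, hs⟩ := exists_eq_ind (A.1 *ᵥ ind {k})
      exact key _ A hA s hs rfl
    intro N
    induction N using Nat.strong_induction_on with
    | _ N ihN =>
    intro A hA s hs hN
    have hodd : Odd s.card := by
      have := mulVec_dotProduct_mulVec A (ind {k}) (ind {k})
      rw [hs, ind_dotProduct_ind, ind_dotProduct_ind, inter_self, inter_self, card_singleton,
        Nat.cast_one] at this
      exact (ZMod.natCast_eq_one_iff_odd).1 this
    have hdisj : ∀ i ∈ S, i ∉ s := by
      intro i hi his
      have := mulVec_dotProduct_mulVec A (ind {i}) (ind {k})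
      have hik : i ≠ k := fun h => hkS (h ▸ hi)
      rw [hs, hA i hi, ind_dotProduct_ind, ind_dotProduct_ind] at this
      simp [his, hik] at this
    by_cases h1 : s.card = 1
    · obtain ⟨l, rfl⟩ := card_eq_one.1 h1
      by_cases hlk : l = k
      · subst hlk
        refine ih _ hcard A fun i hi => ?_
        rcases mem_insert.1 hi with rfl | hi
        · exact hs
        · exact hA i hi
      · have hc : ({l, k} : Finset n).card = 2 := card_pair hlk
        have hw : ind ({l, k} : Finset n) ⬝ᵥ ind {l, k} = 0 :=
          ind_self_dotProduct (by rw [hc]; exact even_two)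
        have hT := hH _ hw (Or.inl hc)
        rw [← H.mul_mem_cancel_left hT]
        refine ih _ hcard _ fun i hi => ?_
        rw [val_mul, ← mulVec_mulVec]
        rcases mem_insert.1 hi with rfl | hi
        · rw [hs, transv_ind_mulVec _ _ _ (by simp)]
          congr 1
          ext a
          simp only [mem_symmDiff, mem_singleton, mem_insert]
          grind
        · rw [hA i hi]
          apply transv_ind_fix
          have := hdisj i hi
          have hik : i ≠ k := fun h => hkS (h ▸ hi)
          simp_all
    · have h3 : 3 ≤ s.card := by
        rcases hodd with ⟨r, hr⟩
        omega
      obtain ⟨l, hlS, hls⟩ : ∃ l, l ∉ S ∧ l ∉ s := by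
        -- otherwise `ind s = 𝟙 - ind S` is fixed by `A`, hence equal to the basis vector at `k`
        by_contra! hcon
        have hsum : ind s = ind univ + ind S := by
          ext i
          by_cases hi : i ∈ S
          · simp [ind_apply, hi, hdisj i hi, CharTwo.add_self_eq_zero]
          · simp [ind_apply, hi, hcon i hi]
        have hfix : A.1 *ᵥ ind s = ind s := by
          rw [hsum, mulVec_add, mulVec_ind_univ, mulVec_ind_of_fix A S hA]
        have : s = {k} := ind_injective (mulVec_injective A (hfix.trans hs.symm))
        rw [this] at h1
        simp at h1
      obtain ⟨t, hts, ht⟩ := exists_subset_card_eq h3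
      have hlt : l ∉ t := fun h => hls (hts h)
      have hc : (insert l t).card = 4 := by rw [card_insert_of_notMem hlt, ht]
      have hw : ind (insert l t) ⬝ᵥ ind (insert l t) = 0 :=
        ind_self_dotProduct (by rw [hc]; decide)
      have hT := hH _ hw (Or.inr hc)
      rw [← H.mul_mem_cancel_left hT]
      have hinter : insert l t ∩ s = t := by
        ext a
        simp only [mem_inter, mem_insert]
        grind
      have hsd : symmDiff s (insert l t) = insert l (s \ t) := by
        ext a
        simp only [mem_symmDiff, mem_insert, mem_sdiff]
        grind
      refine ihN (s.card - 2) (by omega) _ (fun i hi => ?_) (insert l (s \ t)) ?_ ?_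
      · rw [val_mul, ← mulVec_mulVec, hA i hi]
        apply transv_ind_fix
        have := hdisj i hi
        grind
      · rw [val_mul, ← mulVec_mulVec, hs, transv_ind_mulVec _ _ _ (by
          rw [hinter, ht]; decide), hsd]
      · rw [card_insert_of_notMem (by simp [hls]), card_sdiff_of_subset hts]
        omega

/-- `O(n, ℤ/2)` is generated by the transvections along vectors of weight `2` and `4`. -/
theorem eq_top_of_transv_mem (H : Subgroup (orthogonalGroup n (ZMod 2)))
    (hH : ∀ (w : Finset n) (hw : ind w ⬝ᵥ ind w = 0), w.card = 2 ∨ w.card = 4 →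
      transv (ind w) hw ∈ H) : H = ⊤ :=
  (Subgroup.eq_top_iff' H).2 fun A =>
    mem_of_fix H hH _ ∅ rfl A fun i hi => absurd hi (notMem_empty i)

/-- The transposition matrix at `i ≠ j`, as the transvection along `eᵢ + eⱼ`. -/
def swapT {i j : n} (h : i ≠ j) : orthogonalGroup n (ZMod 2) :=
  transv (ind {i, j}) (ind_self_dotProduct (by rw [card_pair h]; exact even_two))

lemma swapT_val {i j : n} (h : i ≠ j) :
    (swapT h).1 = (Equiv.swap i j).permMatrix (ZMod 2) := by
  ext a b
  change (1 : Matrix n n (ZMod 2)) a b + vecMulVec (ind {i, j}) (ind {i, j}) a b = _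
  rw [Equiv.Perm.permMatrix, PEquiv.toMatrix_apply]
  simp only [vecMulVec_apply, one_apply, ind_apply, mem_insert, mem_singleton,
    Equiv.toPEquiv_apply, Option.mem_def, Option.some.injEq, Equiv.swap_apply_def]
  have : (1 : ZMod 2) + 1 = 0 := by decide
  split_ifs <;> grind

lemma swapT_mulVec {i j : n} (h : i ≠ j) (x : n → ZMod 2) :
    (swapT h).1 *ᵥ x = fun a => x (Equiv.swap i j a) := by
  rw [swapT_val]
  ext a
  simp [Equiv.Perm.permMatrix, PEquiv.toMatrix_toPEquiv_mulVec]

/-- Outside dimension `4`, a homomorphism to a commutative group takes all its values in any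
subgroup containing the image of one transposition: transpositions are conjugate, and for a
weight-`4` set `{a, b, c, d}` and an index `e` outside it, the transvection along `{b, c, d, e}`
carries `{a, e}` to `{a, b, c, d}`. -/
theorem eq_top_of_swapT_mem {B : Type*} [CommGroup B] (f : orthogonalGroup n (ZMod 2) →* B)
    (H : Subgroup B) (hn : Fintype.card n ≠ 4) {i j : n} (hij : i ≠ j)
    (hmem : f (swapT hij) ∈ H) : H.comap f = ⊤ := by
  have hconj : ∀ A C : orthogonalGroup n (ZMod 2), f (A * C * A⁻¹) = f C := by
    intro A C
    simp
  have hcongr : ∀ (v w : n → ZMod 2) (hv : v ⬝ᵥ v = 0) (hw : w ⬝ᵥ w = 0)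
      (A : orthogonalGroup n (ZMod 2)), A.1 *ᵥ v = w → f (transv v hv) = f (transv w hw) := by
    intro v w hv hw A hA
    subst hA
    rw [← hconj A, conj_transv]
  -- moving one of the two indices of a transposition
  have hstep : ∀ (a b c : n) (hab : a ≠ b) (hac : a ≠ c), f (swapT hab) = f (swapT hac) := by
    intro a b c hab hac
    by_cases hbc : b = c
    · subst hbc
      rfl
    · refine hcongr _ _ _ _ (swapT hbc) ?_
      rw [swapT_mulVec]
      ext d
      simp only [ind_apply, mem_insert, mem_singleton, Equiv.swap_apply_def]
      grind
  have hsymm : ∀ (a b : n) (hab : a ≠ b), f (swapT hab) = f (swapT hab.symm) := by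
    intro a b hab
    refine hcongr _ _ _ _ 1 ?_
    rw [val_one, one_mulVec, pair_comm]
  have hall : ∀ (a b : n) (hab : a ≠ b), f (swapT hab) ∈ H := by
    intro a b hab
    by_cases hai : a = i
    · subst hai
      rwa [hstep a b j hab hij]
    · rw [hstep a b i hab hai, hsymm, hstep i a j (Ne.symm hai) hij]
      exact hmem
  apply eq_top_of_transv_mem
  intro w hw hcard
  rw [Subgroup.mem_comap]
  rcases hcard with h2 | h4
  · obtain ⟨a, b, hab, rfl⟩ := card_eq_two.1 h2
    exact hall a b hab
  · obtain ⟨e, he⟩ : ∃ e, e ∉ w := by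
      by_contra! hcon
      rw [eq_univ_of_forall hcon, card_univ] at h4
      exact hn h4
    obtain ⟨a, ha⟩ : w.Nonempty := card_pos.1 (by omega)
    have hae : a ≠ e := fun h => he (h ▸ ha)
    have heW : e ∉ w.erase a := fun h => he (mem_of_mem_erase h)
    have hu : ind (insert e (w.erase a)) ⬝ᵥ ind (insert e (w.erase a)) = 0 :=
      ind_self_dotProduct (by
        rw [card_insert_of_notMem heW, card_erase_of_mem ha, h4]
        decide)
    suffices hmove : (transv _ hu).1 *ᵥ ind {a, e} = ind w by
      have := hall a e hae
      rwa [swapT, hcongr _ _ _ hw _ hmove] at this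
    rw [transv_ind_mulVec _ _ _ (by rw [insert_erase_inter_pair]; simp),
      symmDiff_pair_insert_erase ha he]

end Transvections

/-! ### The action of `O(6, ℤ/2)` on six points -/

section Sign

/-- The weight modulo `4` of a vector over `ℤ/2`, twisted at the index `i`: `|x| + 2 xᵢ`. -/
def quad (i : Fin 6) (x : Fin 6 → ZMod 2) : ZMod 4 :=
  ∑ k, ((x k).val : ZMod 4) + 2 * ((x i).val : ZMod 4)

/-- `A` carries the zero set of `quad i` onto that of `quad (σ i)`. -/
def Permutes (A : orthogonalGroup (Fin 6) (ZMod 2)) (σ : Equiv.Perm (Fin 6)) : Prop :=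
  ∀ i x, quad (σ i) (A.1 *ᵥ x) = 0 ↔ quad i x = 0

lemma Permutes.one : Permutes 1 1 := fun i x => by simp

lemma Permutes.mul {A B : orthogonalGroup (Fin 6) (ZMod 2)} {σ τ : Equiv.Perm (Fin 6)}
    (hA : Permutes A σ) (hB : Permutes B τ) : Permutes (A * B) (σ * τ) := fun i x => by
  rw [val_mul, ← mulVec_mulVec, Equiv.Perm.mul_apply, hA, hB]

lemma Permutes.inv {A : orthogonalGroup (Fin 6) (ZMod 2)} {σ : Equiv.Perm (Fin 6)}
    (hA : Permutes A σ) : Permutes A⁻¹ σ⁻¹ := fun i x => by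
  rw [← hA, mulVec_mulVec, ← val_mul, mul_inv_cancel]
  simp

lemma eq_of_quad_eq_zero_iff : ∀ j k : Fin 6,
    (∀ l, quad j (ind {j, l}) = 0 ↔ quad k (ind {j, l}) = 0) → j = k := by
  decide

lemma Permutes.unique {A : orthogonalGroup (Fin 6) (ZMod 2)} {σ τ : Equiv.Perm (Fin 6)}
    (h1 : Permutes A σ) (h2 : Permutes A τ) : σ = τ := by
  ext1 i
  apply eq_of_quad_eq_zero_iff
  intro l
  obtain ⟨x, hx⟩ := mulVec_surjective A (ind {σ i, l})
  simp only at hx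
  rw [← hx, h1, h2]

lemma permutes_swapT {p q : Fin 6} (h : p ≠ q) : Permutes (swapT h) (Equiv.swap p q) := by
  intro i x
  have := Equiv.sum_comp (Equiv.swap p q) (fun k => ((x k).val : ZMod 4))
  simp only [quad, swapT_mulVec, Equiv.swap_apply_self, this]

/-- Doubling `ℤ/2 → ℤ/4`. -/
def dbl : ZMod 2 →+ ZMod 4 where
  toFun a := 2 * (a.val : ZMod 4)
  map_zero' := by decide
  map_add' := by decide

lemma sum_val_add (x y : Fin 6 → ZMod 2) :
    ∑ k, (((x + y) k).val : ZMod 4) =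
      ∑ k, ((x k).val : ZMod 4) + ∑ k, ((y k).val : ZMod 4) + dbl (x ⬝ᵥ y) := by
  have h : ∀ a b : ZMod 2, ((a + b).val : ZMod 4) = (a.val : ZMod 4) + b.val + dbl (a * b) := by
    decide
  simp only [Pi.add_apply, h, sum_add_distrib, dotProduct, map_sum]

/-- On vectors of odd weight `quad i` is odd, hence nonzero. -/
lemma sum_eq_zero_of_quad_eq_zero {i : Fin 6} {x : Fin 6 → ZMod 2} (h : quad i x = 0) :
    ∑ k, x k = 0 := by
  have h1 := congrArg (ZMod.castHom (by decide : 2 ∣ 4) (ZMod 2)) h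
  have h2 : (2 : ZMod 2) = 0 := by decide
  rw [quad, map_add, map_mul, map_sum, map_ofNat, h2, zero_mul, add_zero, map_zero] at h1
  have h3 : ∀ a : ZMod 2, ZMod.castHom (by decide : 2 ∣ 4) (ZMod 2) (a.val : ZMod 4) = a := by
    decide
  simpa only [h3] using h1

/-- The transvection along the complement of `{p, q}` induces the transposition of `p` and `q`:
it changes the weight modulo `4` of `x` by `2 (x · w)`, and `x · w = x_p + x_q` when `x` is even. -/
lemma permutes_transv {p q : Fin 6} (h : p ≠ q)
    (hw : ind ({p, q}ᶜ : Finset (Fin 6)) ⬝ᵥ ind {p, q}ᶜ = 0) :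
    Permutes (transv (ind {p, q}ᶜ) hw) (Equiv.swap p q) := by
  intro i x
  set T := transv (ind {p, q}ᶜ) hw with hT
  have hsum : ∑ k, (T.1 *ᵥ x) k = ∑ k, x k := by
    have h1 := mulVec_dotProduct_mulVec T (ind univ) x
    rw [mulVec_ind_univ] at h1
    simpa [dotProduct, ind_apply] using h1
  by_cases hx : ∑ k, x k = 0
  swap
  · refine iff_of_false (fun h0 => hx ?_) (fun h0 => hx (sum_eq_zero_of_quad_eq_zero h0))
    rw [← hsum]
    exact sum_eq_zero_of_quad_eq_zero h0
  have hc : ind {p, q}ᶜ ⬝ᵥ x = x p + x q := by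
    have h1 : ind {p, q}ᶜ + ind {p, q} = (ind univ : Fin 6 → ZMod 2) := by
      ext k
      simp only [ind_apply, mem_compl, Pi.add_apply, mem_univ, if_true]
      split_ifs <;> simp
    have h2 : (ind univ : Fin 6 → ZMod 2) ⬝ᵥ x = 0 := by simpa [dotProduct, ind_apply] using hx
    have h3 : ind {p, q} ⬝ᵥ x = x p + x q := by
      have : (ind {p, q} : Fin 6 → ZMod 2) = ind {p} + ind {q} := by
        ext k
        simp only [ind_apply, mem_insert, mem_singleton, Pi.add_apply]
        grind
      rw [this, ind_singleton, ind_singleton, add_dotProduct]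
      simp
    rw [← h1, add_dotProduct, h3] at h2
    exact CharTwo.add_eq_zero.1 h2
  have hW : ∑ k, ((((x p + x q) • ind ({p, q}ᶜ : Finset (Fin 6))) k).val : ZMod 4) = 0 := by
    have : ∀ (c : ZMod 2) (p q : Fin 6), p ≠ q →
        ∑ k, (((c • ind ({p, q}ᶜ : Finset (Fin 6))) k).val : ZMod 4) = 0 := by
      decide
    exact this _ p q h
  suffices quad (Equiv.swap p q i) (T.1 *ᵥ x) = quad i x by rw [this]
  have hdbl : ∀ a : ZMod 2, 2 * (a.val : ZMod 4) = dbl a := fun a => rfl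
  rw [hT, transv_mulVec, hc]
  unfold quad
  rw [sum_val_add, hW, hdbl, hdbl, dotProduct_smul, dotProduct_comm, hc, add_zero, add_assoc,
    ← map_add]
  congr 2
  simp only [Pi.add_apply, Pi.smul_apply, smul_eq_mul, ind_apply, mem_compl, mem_insert,
    mem_singleton]
  by_cases hip : i = p
  · subst hip
    have h2 : ∀ a b : ZMod 2, (a + b) * (a + b) + b = a := by decide
    simpa using h2 _ _
  by_cases hiq : i = q
  · subst hiq
    have h2 : ∀ a b : ZMod 2, (a + b) * (a + b) + a = b := by decide
    simpa using h2 _ _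
  have h2 : ∀ a b c : ZMod 2, (a + b) * (a + b) + (c + (a + b)) = c := by decide
  simpa [Equiv.swap_apply_of_ne_of_ne hip hiq, hip, hiq] using h2 _ _ _

lemma exists_permutes (A : orthogonalGroup (Fin 6) (ZMod 2)) : ∃ σ, Permutes A σ := by
  let H : Subgroup (orthogonalGroup (Fin 6) (ZMod 2)) :=
    { carrier := {A | ∃ σ, Permutes A σ}
      one_mem' := ⟨1, Permutes.one⟩
      mul_mem' := fun ⟨σ, hσ⟩ ⟨τ, hτ⟩ => ⟨σ * τ, hσ.mul hτ⟩
      inv_mem' := fun ⟨σ, hσ⟩ => ⟨σ⁻¹, hσ.inv⟩ }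
  have hH : H = ⊤ := by
    apply eq_top_of_transv_mem
    intro w hw hcard
    rcases hcard with h2 | h4
    · obtain ⟨a, b, hab, rfl⟩ := card_eq_two.1 h2
      exact ⟨_, permutes_swapT hab⟩
    · have hc : wᶜ.card = 2 := by rw [card_compl, h4]; rfl
      obtain ⟨a, b, hab, hw'⟩ := card_eq_two.1 hc
      obtain rfl : w = {a, b}ᶜ := by rw [← hw', compl_compl]
      exact ⟨_, permutes_transv hab hw⟩
  have : A ∈ H := hH ▸ Subgroup.mem_top A
  exact this

/-- The homomorphism `O(6, ℤ/2) → S₆` given by the action on the six zero sets of `quad i`. -/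
noncomputable def permHom : orthogonalGroup (Fin 6) (ZMod 2) →* Equiv.Perm (Fin 6) :=
  MonoidHom.mk' (fun A => (exists_permutes A).choose) fun A B =>
    (exists_permutes (A * B)).choose_spec.unique
      ((exists_permutes A).choose_spec.mul (exists_permutes B).choose_spec)

lemma permHom_swapT {p q : Fin 6} (h : p ≠ q) : permHom (swapT h) = Equiv.swap p q :=
  (exists_permutes (swapT h)).choose_spec.unique (permutes_swapT h)

end Sign

/-! ### Restriction to smaller dimensions, and the abelianization -/

section Stabilization

/-- The block inclusion `A ↦ A ⊕ 1` of orthogonal groups. -/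
def stab (m k : ℕ) : orthogonalGroup (Fin m) (ZMod 2) →* orthogonalGroup (Fin (m + k)) (ZMod 2) :=
  MonoidHom.mk' (fun A => ⟨reindex finSumFinEquiv finSumFinEquiv (fromBlocks A.1 0 0 1), by
    rw [mem_orthogonalGroup_iff, transpose_reindex, reindex_apply, reindex_apply,
      submatrix_mul_equiv, fromBlocks_transpose, fromBlocks_multiply]
    simp [self_mul_transpose A]⟩) fun A B => by
    apply Subtype.ext
    change reindex _ _ (fromBlocks (A.1 * B.1) 0 0 1) =
      reindex _ _ (fromBlocks A.1 0 0 1) * reindex _ _ (fromBlocks B.1 0 0 1)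
    simp only [reindex_apply, submatrix_mul_equiv, fromBlocks_multiply]
    simp

/-- In dimensions up to `6`, the sign of the action of `O(6, ℤ/2)` on six points restricts to a
character that is nontrivial on some transposition. -/
lemma exists_character (g : ℕ) (hg : g = 2 ∨ g = 3 ∨ g = 5 ∨ g = 6) :
    ∃ (f : orthogonalGroup (Fin g) (ZMod 2) →* ℤˣ) (i j : Fin g) (h : i ≠ j),
      f (swapT h) ≠ 1 := by
  have h6 : Equiv.Perm.sign (permHom (swapT (by decide : (0 : Fin 6) ≠ 1))) ≠ 1 := by
    rw [permHom_swapT, Equiv.Perm.sign_swap (by decide)]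
    decide
  rcases hg with rfl | rfl | rfl | rfl
  · refine ⟨Equiv.Perm.sign.comp (permHom.comp (stab 2 4)), 0, 1, by decide, ?_⟩
    have : stab 2 4 (swapT (by decide : (0 : Fin 2) ≠ 1)) =
      swapT (by decide : (0 : Fin 6) ≠ 1) := Subtype.ext (by decide)
    simpa [this] using h6
  · refine ⟨Equiv.Perm.sign.comp (permHom.comp (stab 3 3)), 0, 1, by decide, ?_⟩
    have : stab 3 3 (swapT (by decide : (0 : Fin 3) ≠ 1)) =
      swapT (by decide : (0 : Fin 6) ≠ 1) := Subtype.ext (by decide)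
    simpa [this] using h6
  · refine ⟨Equiv.Perm.sign.comp (permHom.comp (stab 5 1)), 0, 1, by decide, ?_⟩
    have : stab 5 1 (swapT (by decide : (0 : Fin 5) ≠ 1)) =
      swapT (by decide : (0 : Fin 6) ≠ 1) := Subtype.ext (by decide)
    simpa [this] using h6
  · exact ⟨Equiv.Perm.sign.comp permHom, 0, 1, by decide, by simpa using h6⟩

end Stabilization

lemma swapT_sq {n : Type*} [DecidableEq n] [Fintype n] {i j : n} (h : i ≠ j) :
    swapT h ^ 2 = 1 := by
  apply Subtype.ext
  rw [pow_two, val_mul, swapT_val, ← permMatrix_mul]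
  simp

lemma zpowers_eq_top {n : Type*} [DecidableEq n] [Fintype n] (hn : Fintype.card n ≠ 4)
    {i j : n} (h : i ≠ j) :
    Subgroup.zpowers (Abelianization.of (swapT h)) = ⊤ := by
  have := eq_top_of_swapT_mem Abelianization.of (Subgroup.zpowers (Abelianization.of (swapT h)))
    hn h (Subgroup.mem_zpowers _)
  rw [Subgroup.eq_top_iff'] at this ⊢
  intro x
  obtain ⟨A, rfl⟩ := QuotientGroup.mk_surjective x
  exact this A

end OrthoF2

/-- for `g ∈ {2, 3, 5, 6}`, the abelianization of `O(g, ℤ/2)` (equivalently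
`H₁(O(g, ℤ/2); ℤ)`) is isomorphic to `ℤ/2`, generated by the class of any transposition
matrix `aᵢ` (the permutation matrix swapping the `i`-th and `(i+1)`-st basis vectors). -/
theorem stmt_6 (g : ℕ) (hg : g = 2 ∨ g = 3 ∨ g = 5 ∨ g = 6) :
    Nonempty (Abelianization (Matrix.orthogonalGroup (Fin g) (ZMod 2)) ≃*
      Multiplicative (ZMod 2)) ∧
    ∀ i j : Fin g, (j : ℕ) = (i : ℕ) + 1 →
      ∃ A : Matrix.orthogonalGroup (Fin g) (ZMod 2),
        (A : Matrix (Fin g) (Fin g) (ZMod 2)) = (Equiv.swap i j).permMatrix (ZMod 2) ∧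
        Subgroup.zpowers (Abelianization.of A) = ⊤ := by
  have h4 : Fintype.card (Fin g) ≠ 4 := by
    rw [Fintype.card_fin]
    omega
  constructor
  · obtain ⟨f, i, j, hij, hf⟩ := OrthoF2.exists_character g hg
    have hne : Abelianization.of (OrthoF2.swapT hij) ≠ 1 := by
      intro h1
      apply hf
      rw [← Abelianization.lift_apply_of f, h1, map_one]
    have hord : orderOf (Abelianization.of (OrthoF2.swapT hij)) = 2 :=
      orderOf_eq_prime (by rw [← map_pow, OrthoF2.swapT_sq, map_one]) hne
    have hcard : Nat.card (Abelianization (Matrix.orthogonalGroup (Fin g) (ZMod 2))) = 2 := by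
      rw [← Subgroup.card_top, ← OrthoF2.zpowers_eq_top h4 hij, Nat.card_zpowers, hord]
    exact ⟨mulEquivOfPrimeCardEq (p := 2) hcard (by simp)⟩
  · intro i j h
    have hij : i ≠ j := by
      rintro rfl
      omega
    exact ⟨OrthoF2.swapT hij, OrthoF2.swapT_val hij, OrthoF2.zpowers_eq_top h4 hij⟩
end

section
/- The abelianization of O(4, ℤ/2) (equivalently, the first integral group homology H₁(O(4, ℤ/2); ℤ)) is isomorphic to ℤ/2 ⊕ ℤ/2, generated by the classes of a₁ and b. -/
/-!
The vectors `v` of `(ℤ/2)⁴` with `v ⬝ v = 1` are those of odd weight, i.e. `eᵢ + c • (1,1,1,1)` with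
`c : ℤ/2`, and `(eᵢ + c • 1) ⬝ (eⱼ + d • 1) = δᵢⱼ + c + d`. Hence in an orthonormal basis the constant
`c` is the same for all four members: a third member would otherwise coincide with one of two members
having different constants. So every orthogonal matrix is `P + c • J` with `P` a permutation matrix
and `J` the all-ones matrix, and `O(4, ℤ/2) ≅ S₄ × ℤ/2` (`orthEquiv`), the second factor being
generated by the central element `b = 1 + J`.

A homomorphism from `S₄` to a commutative group factors through the sign, because transpositions are
conjugate to each other (`hom_eq_of_sign`). Therefore (sign, `c`) induces an isomorphism from the
abelianization to `{±1} × ℤ/2`, and the classes of `a₁` and `b` generate.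
-/

open Matrix

/-- The matrix `P + k • J`, where `P` is the permutation matrix sending `eⱼ` to `e_(σ j)` and `J` is
the all-ones matrix. -/
def permAdd (σ : Equiv.Perm (Fin 4)) (k : ZMod 2) : Matrix (Fin 4) (Fin 4) (ZMod 2) :=
  Matrix.of fun i j => (if i = σ j then 1 else 0) + k

lemma permAdd_mul (σ τ : Equiv.Perm (Fin 4)) (k l : ZMod 2) :
    permAdd σ k * permAdd τ l = permAdd (σ * τ) (k + l) := by
  ext i j
  have h4 : ∑ _m : Fin 4, k * l = 0 := by revert k l; decide
  have h1 : ∑ m : Fin 4, (if i = σ m then (1 : ZMod 2) else 0) = 1 := by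
    rw [Finset.sum_eq_single (σ⁻¹ i)]
    · simp
    · intro b _ hb
      rw [if_neg]
      rintro rfl
      simp at hb
    · simp
  simp only [permAdd, Matrix.mul_apply, Matrix.of_apply, add_mul, mul_add, Finset.sum_add_distrib,
    h4, ← Finset.sum_mul, ← Finset.mul_sum, h1]
  by_cases h : i = σ (τ j) <;> simp [h] <;> ring

lemma permAdd_transpose (σ : Equiv.Perm (Fin 4)) (k : ZMod 2) :
    (permAdd σ k)ᵀ = permAdd σ⁻¹ k := by
  ext i j
  simp only [permAdd, Matrix.transpose_apply, Matrix.of_apply, Equiv.Perm.eq_inv_iff_eq, eq_comm]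

lemma permAdd_one_zero : permAdd 1 0 = 1 := by
  decide

lemma permAdd_mem (σ : Equiv.Perm (Fin 4)) (k : ZMod 2) :
    permAdd σ k ∈ Matrix.orthogonalGroup (Fin 4) (ZMod 2) := by
  rw [Matrix.mem_orthogonalGroup_iff, permAdd_transpose, permAdd_mul, CharTwo.add_self_eq_zero, mul_inv_cancel, permAdd_one_zero]

/-- The homomorphism `(σ, k) ↦ P_σ + k • J` from `S₄ × ℤ/2` to `O(4, ℤ/2)`. -/
def orthHom : Equiv.Perm (Fin 4) × Multiplicative (ZMod 2) →*
    Matrix.orthogonalGroup (Fin 4) (ZMod 2) where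
  toFun x := ⟨permAdd x.1 x.2.toAdd, permAdd_mem _ _⟩
  map_one' := Subtype.ext permAdd_one_zero
  map_mul' x y := Subtype.ext (permAdd_mul x.1 y.1 x.2.toAdd y.2.toAdd).symm

lemma orthHom_injective : Function.Injective orthHom := by
  rw [injective_iff_map_eq_one]
  rintro ⟨σ, k⟩ h
  have h' : permAdd σ k.toAdd = 1 := congrArg Subtype.val h
  have key : ∀ (j s : Fin 4) (k : ZMod 2), (∀ i, (if i = s then (1 : ZMod 2) else 0) + k =
      (1 : Matrix (Fin 4) (Fin 4) (ZMod 2)) i j) → s = j ∧ k = 0 := by decide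
  have h2 j := key j (σ j) k.toAdd fun i => congrFun (congrFun h' i) j
  exact Prod.ext (Equiv.ext fun j => (h2 j).1) (h2 0).2

lemma odd_vector : ∀ v : Fin 4 → ZMod 2, ∑ i, v i * v i = 1 →
    ∃ (p : Fin 4) (c : ZMod 2), ∀ i, v i = (if i = p then 1 else 0) + c := by decide

lemma dot_odd : ∀ (p q : Fin 4) (c d : ZMod 2),
    ∑ i, ((if i = p then (1 : ZMod 2) else 0) + c) * ((if i = q then 1 else 0) + d) =
      (if p = q then 1 else 0) + c + d := by decide

lemma orthHom_surjective : Function.Surjective orthHom := by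
  rintro ⟨A, hA⟩
  have hA' : Aᵀ * A = 1 := (Matrix.mem_orthogonalGroup_iff' (Fin 4) (ZMod 2)).1 hA
  have hdot (i j : Fin 4) : ∑ m, A m i * A m j = if i = j then 1 else 0 := by
    have := congrFun (congrFun hA' i) j
    simpa only [Matrix.mul_apply, Matrix.transpose_apply, Matrix.one_apply] using this
  have hcol (j : Fin 4) := odd_vector (fun m => A m j) (by simpa using hdot j j)
  choose p c hpc using hcol
  have hrel (i j : Fin 4) (hij : i ≠ j) : (if p i = p j then (1 : ZMod 2) else 0) + c i + c j = 0 := by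
    have := hdot i j
    simp only [hpc] at this
    rw [dot_odd, if_neg hij] at this
    exact this
  have hiff (i j : Fin 4) (hij : i ≠ j) : p i = p j ↔ c i ≠ c j := by
    have h2 : ∀ c d : ZMod 2, (1 + c + d = 0 → c ≠ d) ∧ (0 + c + d = 0 → c = d) := by decide
    have h := hrel i j hij
    by_cases hp : p i = p j
    · rw [if_pos hp] at h
      exact iff_of_true hp ((h2 _ _).1 h)
    · rw [if_neg hp] at h
      exact iff_of_false hp (not_not.2 ((h2 _ _).2 h))
  have hc (i j : Fin 4) : c i = c j := by
    by_contra hne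
    have hij : i ≠ j := fun h => hne (h ▸ rfl)
    obtain ⟨k, hki, hkj⟩ : ∃ k : Fin 4, k ≠ i ∧ k ≠ j := by
      clear hne hij; revert i j; decide
    have hpij := (hiff i j hij).2 hne
    have h3 : ∀ x y z : ZMod 2, x ≠ y → z = x ∨ z = y := by decide
    -- If `c k = c i` then `c k ≠ c j`, so `p k = p j = p i` and columns `k` and `i` would be equal.
    rcases h3 _ _ (c k) hne with h | h
    · have h1 : p k = p j := (hiff k j hkj).2 (h ▸ hne)
      exact (hiff k i hki).1 (h1.trans hpij.symm) h
    · have h1 : p k = p i := (hiff k i hki).2 (h ▸ Ne.symm hne)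
      exact (hiff k j hkj).1 (h1.trans hpij) h
  have hp : Function.Injective p := fun i j h => by
    by_contra hij
    exact (hiff i j hij).1 h (hc i j)
  refine ⟨(Equiv.ofBijective p (Finite.injective_iff_bijective.1 hp), Multiplicative.ofAdd (c 0)),
    Subtype.ext ?_⟩
  ext i j
  simp [orthHom, permAdd, hpc, hc j 0]

/-- The isomorphism `S₄ × ℤ/2 ≅ O(4, ℤ/2)`. -/
noncomputable def orthEquiv : Equiv.Perm (Fin 4) × Multiplicative (ZMod 2) ≃*
    Matrix.orthogonalGroup (Fin 4) (ZMod 2) :=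
  MulEquiv.ofBijective orthHom ⟨orthHom_injective, orthHom_surjective⟩

/-- A homomorphism from `S₄` to a commutative group is determined by the sign and the image of one
transposition. -/
lemma hom_eq_of_sign {H : Type*} [CommGroup H] (f : Equiv.Perm (Fin 4) →* H)
    (σ : Equiv.Perm (Fin 4)) :
    f σ = if Equiv.Perm.sign σ = 1 then 1 else f (Equiv.swap 0 1) := by
  have ht : f (Equiv.swap 0 1) * f (Equiv.swap 0 1) = 1 := by
    rw [← map_mul, Equiv.swap_mul_self, map_one]
  induction σ using Equiv.Perm.swap_induction_on with
  | one => simp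
  | swap_mul g x y hxy ih =>
    have hs : f (Equiv.swap x y) = f (Equiv.swap 0 1) :=
      isConj_iff_eq.1 (f.map_isConj (Equiv.Perm.isConj_swap hxy (by decide)))
    rw [map_mul, ih, hs, map_mul, Equiv.Perm.sign_swap hxy]
    rcases Int.units_eq_one_or (Equiv.Perm.sign g) with h | h <;> simp [h, ht]

/-- The homomorphism (sign, constant) on the abelianization of `O(4, ℤ/2)`. -/
noncomputable def abHom : Abelianization (Matrix.orthogonalGroup (Fin 4) (ZMod 2)) →*
    ℤˣ × Multiplicative (ZMod 2) :=
  Abelianization.lift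
    ((MonoidHom.prodMap Equiv.Perm.sign (MonoidHom.id _)).comp orthEquiv.symm.toMonoidHom)

lemma abHom_of (x : Equiv.Perm (Fin 4) × Multiplicative (ZMod 2)) :
    abHom (Abelianization.of (orthEquiv x)) = (Equiv.Perm.sign x.1, x.2) := by
  simp [abHom, Prod.map]

/-- The class of `P_σ + k • J` is that of `a₁` or trivial, according to the sign of `σ`, times that
of `1 + k • J`. -/
lemma of_orthEquiv (σ : Equiv.Perm (Fin 4)) (k : Multiplicative (ZMod 2)) :
    Abelianization.of (orthEquiv (σ, k)) =
      (if Equiv.Perm.sign σ = 1 then 1 else Abelianization.of (orthEquiv (Equiv.swap 0 1, 1))) *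
        Abelianization.of (orthEquiv (1, k)) := by
  have h := hom_eq_of_sign ((Abelianization.of.comp orthEquiv.toMonoidHom).comp
    (MonoidHom.inl (Equiv.Perm (Fin 4)) (Multiplicative (ZMod 2)))) σ
  simp only [MonoidHom.comp_apply, MonoidHom.inl_apply, MulEquiv.toMonoidHom_eq_coe,
    MonoidHom.coe_coe] at h
  rw [← h, ← map_mul, ← map_mul]
  simp

lemma abHom_bijective : Function.Bijective abHom := by
  constructor
  · rw [injective_iff_map_eq_one]
    intro x hx
    obtain ⟨g, rfl⟩ := QuotientGroup.mk_surjective x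
    obtain ⟨⟨σ, k⟩, rfl⟩ := orthEquiv.surjective g
    change Abelianization.of (orthEquiv (σ, k)) = 1
    have h : (Equiv.Perm.sign σ, k) = 1 := (abHom_of (σ, k)).symm.trans hx
    obtain ⟨h1, rfl⟩ : Equiv.Perm.sign σ = 1 ∧ k = 1 := Prod.ext_iff.1 h
    rw [of_orthEquiv, if_pos h1, one_mul]
    exact (congrArg _ (map_one orthEquiv)).trans (map_one _)
  · rintro ⟨s, k⟩
    obtain ⟨σ, rfl⟩ := Equiv.Perm.sign_surjective (Fin 4) s
    exact ⟨_, abHom_of (σ, k)⟩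

/-- the abelianization of `O(4, ℤ/2)` (equivalently `H₁(O(4, ℤ/2); ℤ)`) is
isomorphic to `ℤ/2 ⊕ ℤ/2`, generated by the classes of `a₁` (the permutation matrix swapping
the first two basis vectors) and `b` (the matrix sending each basis vector to the sum of the
other three). -/
theorem stmt_7 :
    Nonempty (Abelianization (Matrix.orthogonalGroup (Fin 4) (ZMod 2)) ≃*
      Multiplicative (ZMod 2) × Multiplicative (ZMod 2)) ∧
    ∃ A B : Matrix.orthogonalGroup (Fin 4) (ZMod 2),
      (A : Matrix (Fin 4) (Fin 4) (ZMod 2)) =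
        (Equiv.swap (0 : Fin 4) 1).permMatrix (ZMod 2) ∧
      (B : Matrix (Fin 4) (Fin 4) (ZMod 2)) = !![0, 1, 1, 1; 1, 0, 1, 1; 1, 1, 0, 1; 1, 1, 1, 0] ∧
      Subgroup.closure {Abelianization.of A, Abelianization.of B} = ⊤ := by
  constructor
  · have e : ℤˣ ≃* Multiplicative (ZMod 2) :=
      mulEquivOfPrimeCardEq (p := 2) (by simp) (by simp)
    exact ⟨(MulEquiv.ofBijective abHom abHom_bijective).trans
      (MulEquiv.prodCongr e (MulEquiv.refl _))⟩
  · refine ⟨orthEquiv (Equiv.swap 0 1, 1), orthEquiv (1, Multiplicative.ofAdd 1), ?_, ?_, ?_⟩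
    · change permAdd (Equiv.swap 0 1) 0 = _
      decide
    · change permAdd 1 1 = _
      decide
    · rw [eq_top_iff]
      rintro x -
      obtain ⟨g, rfl⟩ := QuotientGroup.mk_surjective x
      obtain ⟨⟨σ, k⟩, rfl⟩ := orthEquiv.surjective g
      change Abelianization.of (orthEquiv (σ, k)) ∈ Subgroup.closure _
      rw [of_orthEquiv σ k]
      refine Subgroup.mul_mem _ ?_ ?_
      · split_ifs
        · exact one_mem _
        · exact Subgroup.subset_closure (Set.mem_insert _ _)
      · have hk : k = 1 ∨ k = Multiplicative.ofAdd 1 := by revert k; decide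
        rcases hk with rfl | rfl
        · have : Abelianization.of (orthEquiv (1, 1)) = 1 :=
            (congrArg _ (map_one orthEquiv)).trans (map_one _)
          rw [this]
          exact one_mem _
        · exact Subgroup.subset_closure (Set.mem_insert_of_mem _ rfl)
end
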